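/- Let m(ξ) = (iξ)^γ |ξ|^β P(ξ) e^{−|ξ|^{2α}} on ℝ², where |γ| = k, P(ξ) is smooth and homogeneous of degree 0 away from the origin (e.g., P_{ab}(ξ) = δ_{ab} − ξ_aξ_b/|ξ|²), α > 0, and β + k > −2. Then K := F^{−1}(m) satisfies the pointwise bound |K(x)| ≤ C(α,β,k)(1+|x|)^{−(2+β+k)} for all x ∈ ℝ². -/

import Mathlib

open MeasureTheory
open scoped FourierTransform

noncomputable section

abbrev E2 := EuclideanSpace ℝ (Fin 2)

/-- The multiplier `m(ξ) = (iξ)^γ |ξ|^β P(ξ) e^{−|ξ|^{2α}}` with multi-index `γ`. -/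
def mSymb (γ : Fin 2 → ℕ) (β α : ℝ) (P : E2 → ℂ) (ξ : E2) : ℂ :=
  (∏ i : Fin 2, (Complex.I * (ξ i : ℂ)) ^ γ i) * ((‖ξ‖ ^ β : ℝ) : ℂ) * P ξ *
    Complex.exp (-((‖ξ‖ ^ (2 * α) : ℝ) : ℂ))

/-- Symbol estimates of order `d` off the origin with explicit constants. -/
def SymB {F : Type*} [NormedAddCommGroup F] [NormedSpace ℝ F] (d : ℝ) (C : ℕ → ℝ)
    (f : E2 → F) : Prop :=
  ContDiffOn ℝ (⊤ : ℕ∞) f {(0 : E2)}ᶜ ∧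
    ∀ n : ℕ, ∀ x : E2, x ≠ 0 → ‖iteratedFDeriv ℝ n f x‖ ≤ C n * ‖x‖ ^ (d - n)

lemma norm_iteratedFDeriv_comp_smul_le {F : Type*} [NormedAddCommGroup F] [NormedSpace ℝ F]
    (f : E2 → F) (c : ℝ) (hc : 0 < c) (n : ℕ) (x : E2) :
    ‖iteratedFDeriv ℝ n (fun y => f (c • y)) x‖ ≤ c ^ n * ‖iteratedFDeriv ℝ n f (c • x)‖ := by
  let e : E2 ≃L[ℝ] E2 := ContinuousLinearEquiv.smulLeft (Units.mk0 c hc.ne')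
  have h := e.iteratedFDerivWithin_comp_right (f := f) uniqueDiffOn_univ (Set.mem_univ (e x)) n
  rw [Set.preimage_univ, iteratedFDerivWithin_univ, iteratedFDerivWithin_univ] at h
  have h1 : (f ∘ e) = fun y => f (c • y) := rfl
  have h2 : e x = c • x := rfl
  rw [h1, h2] at h
  rw [h]
  refine (ContinuousMultilinearMap.norm_compContinuousLinearMap_le _ _).trans ?_
  rw [mul_comm]
  gcongr
  rw [Finset.prod_const, Finset.card_univ, Fintype.card_fin]
  gcongr
  refine ContinuousLinearMap.opNorm_le_bound _ hc.le fun y => ?_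
  change ‖c • y‖ ≤ _
  rw [norm_smul, Real.norm_of_nonneg hc.le]

lemma isOpen_U : IsOpen ({(0 : E2)}ᶜ) := isOpen_compl_singleton

lemma cda {F : Type*} [NormedAddCommGroup F] [NormedSpace ℝ F] {f : E2 → F}
    (hf : ContDiffOn ℝ (⊤ : ℕ∞) f {(0 : E2)}ᶜ) {x : E2} (hx : x ≠ 0) :
    ContDiffAt ℝ (⊤ : ℕ∞) f x := hf.contDiffAt (isOpen_U.mem_nhds hx)

lemma cda_nat {F : Type*} [NormedAddCommGroup F] [NormedSpace ℝ F] {f : E2 → F}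
    (hf : ContDiffOn ℝ (⊤ : ℕ∞) f {(0 : E2)}ᶜ) {x : E2} (hx : x ≠ 0) (n : ℕ) :
    ContDiffAt ℝ n f x := (cda hf hx).of_le (by exact_mod_cast le_top)

lemma symB_of_homog {F : Type*} [NormedAddCommGroup F] [NormedSpace ℝ F] (d : ℝ) (f : E2 → F)
    (hf : ContDiffOn ℝ (⊤ : ℕ∞) f {(0 : E2)}ᶜ)
    (hh : ∀ c : ℝ, 0 < c → ∀ x : E2, x ≠ 0 → f (c • x) = c ^ d • f x) :
    ∃ C, SymB d C f := by
  have key : ∀ n : ℕ, ∃ M : ℝ, ∀ y ∈ Metric.sphere (0 : E2) 1, ‖iteratedFDeriv ℝ n f y‖ ≤ M := by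
    intro n
    have hcomp : IsCompact (Metric.sphere (0 : E2) 1) := isCompact_sphere _ _
    refine hcomp.exists_bound_of_continuousOn ?_
    intro y hy
    have hy0 : y ≠ 0 := by
      rintro rfl; simp at hy
    have := (cda hf hy0).iteratedFDeriv_right (m := 0) (i := n) (by rw [zero_add]; exact_mod_cast le_top)
    exact this.continuousAt.continuousWithinAt
  choose M hM using key
  refine ⟨M, hf, fun n x hx => ?_⟩
  have hn : 0 < ‖x‖ := norm_pos_iff.mpr hx
  set c := ‖x‖⁻¹ with hc
  have hcp : 0 < c := inv_pos.mpr hn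
  have heq : f =ᶠ[nhds x] (c ^ (-d)) • (fun y => f (c • y)) := by
    filter_upwards [isOpen_U.mem_nhds hx] with y hy
    simp only [Pi.smul_apply]
    rw [hh c hcp y hy, smul_smul, ← Real.rpow_add hcp]
    simp
  have hcx : c • x ≠ 0 := smul_ne_zero hcp.ne' hx
  have hcd : ContDiffAt ℝ n (fun y => f (c • y)) x := by
    have h1 := cda_nat hf hcx n
    exact h1.comp x (contDiff_const_smul c).contDiffAt
  rw [(Filter.EventuallyEq.iteratedFDeriv ℝ heq n).eq_of_nhds, iteratedFDeriv_const_smul_apply hcd, norm_smul,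
    Real.norm_of_nonneg (by positivity)]
  have h3 := norm_iteratedFDeriv_comp_smul_le f c hcp n x
  have h4 := hM n (c • x) (by
    simp [norm_smul, hc, hn.ne'])
  calc c ^ (-d) * ‖iteratedFDeriv ℝ n (fun y => f (c • y)) x‖
      ≤ c ^ (-d) * (c ^ n * M n) := by gcongr; exact h3.trans (by gcongr)
    _ = M n * ‖x‖ ^ (d - n) := by
      rw [hc, Real.inv_rpow hn.le, Real.rpow_neg hn.le, inv_inv, Real.rpow_sub hn,
        Real.rpow_natCast, inv_pow]
      field_simp

/-- Leibniz constants. -/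
def mulC (C₁ C₂ : ℕ → ℝ) (n : ℕ) : ℝ :=
  ∑ i ∈ Finset.range (n + 1), (n.choose i : ℝ) * C₁ i * C₂ (n - i)

lemma SymB.mul {d₁ d₂ : ℝ} {C₁ C₂ : ℕ → ℝ} {f g : E2 → ℂ} (hf : SymB d₁ C₁ f)
    (hg : SymB d₂ C₂ g) : SymB (d₁ + d₂) (mulC C₁ C₂) (fun x => f x * g x) := by
  refine ⟨hf.1.mul hg.1, fun n x hx => ?_⟩
  have hn : 0 < ‖x‖ := norm_pos_iff.mpr hx
  have h := norm_iteratedFDerivWithin_mul_le hf.1 hg.1 isOpen_U.uniqueDiffOn (x := x) hx (n := n)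
    (by exact_mod_cast le_top)
  simp only [iteratedFDerivWithin_of_isOpen _ isOpen_U (show x ∈ ({(0 : E2)}ᶜ : Set E2) from hx)] at h
  refine h.trans ?_
  rw [mulC, Finset.sum_mul]
  refine Finset.sum_le_sum fun i hi => ?_
  have hi' : i ≤ n := by simpa [Nat.lt_succ_iff] using hi
  have e : ‖x‖ ^ (d₁ + d₂ - n) = ‖x‖ ^ (d₁ - i) * ‖x‖ ^ (d₂ - (n - i : ℕ)) := by
    rw [← Real.rpow_add hn]; congr 1; push_cast [hi']; ring
  calc (n.choose i : ℝ) * ‖iteratedFDeriv ℝ i f x‖ * ‖iteratedFDeriv ℝ (n - i) g x‖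
      ≤ (n.choose i : ℝ) * (C₁ i * ‖x‖ ^ (d₁ - i)) * (C₂ (n - i) * ‖x‖ ^ (d₂ - (n - i : ℕ))) := by
        have a := hf.2 i x hx
        have b := hg.2 (n - i) x hx
        have := (norm_nonneg _).trans a
        gcongr
    _ = _ := by rw [e]; ring

lemma SymB.scale {d : ℝ} {C : ℕ → ℝ} {f : E2 → ℂ} (hf : SymB d C f) {R : ℝ} (hR : 0 < R) :
    SymB d C (fun x => R ^ d • f (R⁻¹ • x)) := by
  have hRi : 0 < R⁻¹ := inv_pos.mpr hR
  have hcd : ∀ x : E2, x ≠ 0 → ContDiffAt ℝ (⊤ : ℕ∞) (fun x => f (R⁻¹ • x)) x := fun x hx =>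
    (cda hf.1 (smul_ne_zero hRi.ne' hx)).comp x (contDiff_const_smul R⁻¹).contDiffAt
  refine ⟨fun x hx => ((hcd x hx).const_smul (R ^ d)).contDiffWithinAt, fun n x hx => ?_⟩
  have hn : 0 < ‖x‖ := norm_pos_iff.mpr hx
  have h1 := iteratedFDeriv_const_smul_apply (a := R ^ d) (i := n)
    ((hcd x hx).of_le (by exact_mod_cast le_top))
  have h0 : (fun x => R ^ d • f (R⁻¹ • x)) = R ^ d • (fun x => f (R⁻¹ • x)) := rfl
  rw [h0, h1, norm_smul, Real.norm_of_nonneg (by positivity)]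
  calc R ^ d * ‖iteratedFDeriv ℝ n (fun x => f (R⁻¹ • x)) x‖
      ≤ R ^ d * (R⁻¹ ^ n * (C n * ‖R⁻¹ • x‖ ^ (d - n))) := by
        gcongr
        refine (norm_iteratedFDeriv_comp_smul_le f _ hRi n x).trans ?_
        gcongr
        exact hf.2 n _ (smul_ne_zero hRi.ne' hx)
    _ = C n * ‖x‖ ^ (d - n) := by
        rw [norm_smul, Real.norm_of_nonneg hRi.le, Real.mul_rpow hRi.le hn.le,
          Real.inv_rpow hR.le, Real.rpow_sub hR, Real.rpow_natCast, inv_pow]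
        field_simp

lemma exp_poly_bound (n : ℕ) (p : ℝ) (hp : 0 ≤ p) :
    ∃ B : ℝ, ∀ s : ℝ, 0 ≤ s → Real.exp (-s) * (1 + s) ^ n * s ^ p ≤ B := by
  obtain ⟨m, hm⟩ := exists_nat_ge p
  refine ⟨Real.exp 1 * (n + m).factorial, fun s hs => ?_⟩
  have h1 : s ^ p ≤ (1 + s) ^ m := by
    calc s ^ p ≤ (1 + s) ^ p := by gcongr; linarith
      _ ≤ (1 + s) ^ (m : ℝ) := Real.rpow_le_rpow_of_exponent_le (by linarith) hm
      _ = _ := Real.rpow_natCast _ _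
  have h2 : (1 + s) ^ (n + m) ≤ (n + m).factorial * Real.exp (1 + s) := by
    have := Real.pow_div_factorial_le_exp (1 + s) (by linarith) (n + m)
    rwa [div_le_iff₀' (by positivity)] at this
  calc Real.exp (-s) * (1 + s) ^ n * s ^ p ≤ Real.exp (-s) * (1 + s) ^ n * (1 + s) ^ m := by gcongr
    _ = Real.exp (-s) * (1 + s) ^ (n + m) := by rw [pow_add]; ring
    _ ≤ Real.exp (-s) * ((n + m).factorial * Real.exp (1 + s)) := by gcongr
    _ = _ := by
      rw [Real.exp_add, Real.exp_neg]
      field_simp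

lemma contDiffOn_norm_rpow (p : ℝ) :
    ContDiffOn ℝ (⊤ : ℕ∞) (fun x : E2 => ‖x‖ ^ p) {(0 : E2)}ᶜ := fun x hx =>
  ((contDiffAt_norm ℝ hx).rpow_const_of_ne (norm_ne_zero_iff.mpr hx)).contDiffWithinAt

lemma norm_iteratedFDeriv_exp_neg (i : ℕ) (s : ℝ) :
    ‖iteratedFDeriv ℝ i (fun s : ℝ => Real.exp (-s)) s‖ ≤ Real.exp (-s) := by
  rw [norm_iteratedFDeriv_eq_norm_iteratedDeriv]
  have h := iteratedDeriv_exp_const_mul i (-1)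
  simp only [neg_one_mul] at h
  have h' := congrFun h s
  rw [h']
  simp

lemma symB_exp (α : ℝ) (hα : 0 < α) (a : ℝ) (ha : 0 ≤ a) :
    ∃ C, SymB (-a) C (fun x : E2 => Complex.exp (-((‖x‖ ^ (2 * α) : ℝ) : ℂ))) := by
  obtain ⟨C, hC⟩ := symB_of_homog (2 * α) (fun x : E2 => ‖x‖ ^ (2 * α)) (contDiffOn_norm_rpow _)
    (by
      intro c hc x _
      simp only [norm_smul, Real.norm_of_nonneg hc.le, smul_eq_mul]
      rw [Real.mul_rpow hc.le (norm_nonneg _)])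
  have hfun : (fun x : E2 => Complex.exp (-((‖x‖ ^ (2 * α) : ℝ) : ℂ))) =
      Complex.ofRealCLM ∘ ((fun s : ℝ => Real.exp (-s)) ∘ (fun x : E2 => ‖x‖ ^ (2 * α))) := by
    ext x; simp
  have hexp : ContDiff ℝ (⊤ : ℕ∞) (fun s : ℝ => Real.exp (-s)) := by fun_prop
  have hreal : ContDiffOn ℝ (⊤ : ℕ∞)
      ((fun s : ℝ => Real.exp (-s)) ∘ (fun x : E2 => ‖x‖ ^ (2 * α))) {(0 : E2)}ᶜ :=
    hexp.comp_contDiffOn hC.1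
  have hp : 0 ≤ a / (2 * α) := by positivity
  choose B hB using fun n => exp_poly_bound n (a / (2 * α)) hp
  let A : ℕ → ℝ := fun n => 1 + ∑ i ∈ Finset.range (n + 1), |C i|
  refine ⟨fun n => n.factorial * A n ^ n * B n, ?_⟩
  rw [hfun]
  refine ⟨Complex.ofRealCLM.contDiff.comp_contDiffOn hreal, fun n x hx => ?_⟩
  have hn : 0 < ‖x‖ := norm_pos_iff.mpr hx
  have hA1 : 1 ≤ A n := by
    have : 0 ≤ ∑ i ∈ Finset.range (n + 1), |C i| := Finset.sum_nonneg fun _ _ => abs_nonneg _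
    simp only [A]; linarith
  rw [show Complex.ofRealCLM = (Complex.ofRealLI.toContinuousLinearMap) from rfl]
  have hnorm := Complex.ofRealLI.norm_iteratedFDeriv_comp_left (i := n)
    (cda_nat hreal hx n) le_rfl
  refine (le_of_eq hnorm).trans ?_
  set s := ‖x‖ ^ (2 * α) with hs
  have hs0 : 0 < s := by positivity
  have hmem : x ∈ ({(0 : E2)}ᶜ : Set E2) := hx
  have hcomp := norm_iteratedFDerivWithin_comp_le (n := n) (x := x)
    (hexp.contDiffOn (s := Set.univ)) hC.1 (by exact_mod_cast le_top)
    uniqueDiffOn_univ isOpen_U.uniqueDiffOn (Set.mapsTo_univ _ _) hx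
    (C := Real.exp (-s)) (D := A n * (1 + s) * ‖x‖⁻¹)
    (fun i _ => by
      rw [iteratedFDerivWithin_univ]
      exact norm_iteratedFDeriv_exp_neg i _)
    (fun i hi1 hin => by
      rw [iteratedFDerivWithin_of_isOpen _ isOpen_U hmem]
      refine (hC.2 i x hx).trans ?_
      have hCA : C i ≤ A n := by
        have : |C i| ≤ ∑ i ∈ Finset.range (n + 1), |C i| :=
          Finset.single_le_sum (f := fun i => |C i|) (fun _ _ => abs_nonneg _)
            (Finset.mem_range.mpr (by omega))
        have := le_abs_self (C i)
        simp only [A]; linarith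
      rw [Real.rpow_sub hn, Real.rpow_natCast, ← hs, mul_pow, mul_pow, inv_pow, div_eq_mul_inv,
        ← mul_assoc]
      gcongr
      · exact hCA.trans (le_self_pow₀ hA1 (by omega))
      · exact (by linarith : s ≤ 1 + s).trans (le_self_pow₀ (by linarith) (by omega)))
  rw [iteratedFDerivWithin_of_isOpen _ isOpen_U hmem] at hcomp
  refine hcomp.trans ?_
  have hb := hB n s hs0.le
  have hsp : s ^ (a / (2 * α)) = ‖x‖ ^ a := by
    rw [hs, ← Real.rpow_mul hn.le]; congr 1; field_simp
  rw [hsp] at hb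
  have hxa : 0 < ‖x‖ ^ a := by positivity
  calc (n.factorial : ℝ) * Real.exp (-s) * (A n * (1 + s) * ‖x‖⁻¹) ^ n
      = n.factorial * A n ^ n * (Real.exp (-s) * (1 + s) ^ n * ‖x‖ ^ a) * ‖x‖ ^ (-a - n) := by
        rw [Real.rpow_sub hn, Real.rpow_natCast, Real.rpow_neg hn.le, mul_pow, mul_pow, inv_pow]
        field_simp
    _ ≤ n.factorial * A n ^ n * B n * ‖x‖ ^ (-a - n) := by gcongr

lemma exists_cutoff : ∃ ψ : E2 → ℂ, ContDiff ℝ (⊤ : ℕ∞) ψ ∧ (∀ x, ‖x‖ < 1 → ψ x = 0) ∧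
    (∀ x, 2 ≤ ‖x‖ → ψ x = 1) ∧ (∀ x, ‖1 - ψ x‖ ≤ 1) ∧ ∃ C, SymB 0 C ψ := by
  let b : ContDiffBump (0 : E2) := ⟨1, 2, by norm_num, by norm_num⟩
  let ψ : E2 → ℂ := fun x => ((1 - b x : ℝ) : ℂ)
  have hsm : ContDiff ℝ (⊤ : ℕ∞) ψ := by
    have : ContDiff ℝ (⊤ : ℕ∞) (fun x => 1 - b x) := contDiff_const.sub b.contDiff
    exact Complex.ofRealCLM.contDiff.comp this
  have h1 : ∀ x, 2 ≤ ‖x‖ → ψ x = 1 := fun x hx => by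
    have : b x = 0 := b.zero_of_le_dist (by simpa using hx)
    simp [ψ, this]
  refine ⟨ψ, hsm, fun x hx => ?_, h1, fun x => ?_, ?_⟩
  · have : b x = 1 := b.one_of_mem_closedBall (by simpa using hx.le)
    simp [ψ, this]
  · have : (1 : ℂ) - ψ x = ((b x : ℝ) : ℂ) := by simp [ψ]
    rw [this, Complex.norm_real, Real.norm_of_nonneg b.nonneg]
    exact b.le_one
  have key : ∀ n : ℕ, ∃ M : ℝ, ∀ y ∈ Metric.closedBall (0 : E2) 2,
      ‖iteratedFDeriv ℝ n ψ y‖ ≤ M := fun n =>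
    (isCompact_closedBall _ _).exists_bound_of_continuousOn
      (hsm.continuous_iteratedFDeriv (m := n) (by exact_mod_cast le_top)).continuousOn
  choose M hM using key
  refine ⟨fun n => (|M n| + 1) * 2 ^ n, hsm.contDiffOn, fun n x hx => ?_⟩
  have hn : 0 < ‖x‖ := norm_pos_iff.mpr hx
  rw [zero_sub, Real.rpow_neg hn.le, Real.rpow_natCast]
  rcases le_or_gt ‖x‖ 2 with h2 | h2
  · have h3 := (hM n x (by simpa using h2)).trans (le_abs_self _)
    have h4 : ‖x‖ ^ n ≤ 2 ^ n := by gcongr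
    calc ‖iteratedFDeriv ℝ n ψ x‖ ≤ (|M n| + 1) * 1 := by linarith
      _ ≤ (|M n| + 1) * (2 ^ n * (‖x‖ ^ n)⁻¹) := by
        gcongr
        rw [← div_eq_mul_inv, one_le_div (by positivity)]
        exact h4
      _ = _ := by ring
  · have heq : ψ =ᶠ[nhds x] fun _ => (1 : ℂ) := by
      filter_upwards [continuous_norm.continuousAt.eventually (lt_mem_nhds h2)] with y hy
      exact h1 y (le_of_lt hy)
    rw [(Filter.EventuallyEq.iteratedFDeriv ℝ heq n).eq_of_nhds]
    rcases eq_or_ne n 0 with rfl | hn0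
    · simp
    · rw [iteratedFDeriv_const_of_ne hn0]
      simp only [Pi.zero_apply, norm_zero]
      positivity

lemma fourierInv_norm_le_integral {f : E2 → ℂ} (w : E2) :
    ‖𝓕⁻ f w‖ ≤ ∫ x, ‖f x‖ := by
  rw [Real.fourierInv_eq]
  refine (norm_integral_le_integral_norm _).trans (le_of_eq ?_)
  simp_rw [Circle.norm_smul]

lemma fourierInv_le_of_deriv {g : E2 → ℂ} (hg : ContDiff ℝ (⊤ : ℕ∞) g)
    (hint : ∀ n : ℕ, Integrable (iteratedFDeriv ℝ n g)) (N : ℕ) (w : E2) (hw : ‖w‖ = 1) :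
    ‖𝓕⁻ g w‖ ≤ ∫ x, ‖iteratedFDeriv ℝ N g x‖ := by
  rw [Real.fourierInv_eq_fourier_neg]
  set v := -w with hv
  have hv1 : ‖v‖ = 1 := by rw [hv, norm_neg, hw]
  have h := congrFun (Real.fourier_iteratedFDeriv (N := ⊤) hg (fun n _ => hint n) (n := N) le_top) v
  have hle : ‖𝓕 (iteratedFDeriv ℝ N g) v‖ ≤ ∫ x, ‖iteratedFDeriv ℝ N g x‖ := by
    rw [Real.fourier_eq]
    refine (norm_integral_le_integral_norm _).trans (le_of_eq ?_)
    simp_rw [Circle.norm_smul]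
  rw [h] at hle
  refine le_trans ?_ hle
  have hop := (VectorFourier.fourierPowSMulRight (-innerSL ℝ) (𝓕 g) v N).le_opNorm (fun _ => v)
  rw [VectorFourier.fourierPowSMulRight_apply] at hop
  simp only [Finset.prod_const, hv1, one_pow, mul_one] at hop
  refine le_trans ?_ hop
  have hin : ((-innerSL ℝ) v : E2 →L[ℝ] ℝ) v = -1 := by
    change -(innerSL ℝ v v) = -1
    rw [innerSL_apply_apply, real_inner_self_eq_norm_sq, hv1]; norm_num
  rw [hin, norm_smul, norm_smul, norm_pow, norm_pow, norm_neg, norm_neg, norm_one]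
  have : ‖(2 * (Real.pi : ℂ) * Complex.I)‖ = 2 * Real.pi := by
    simp [abs_of_pos Real.pi_pos]
  rw [this]
  simp only [one_pow, one_mul]
  refine le_mul_of_one_le_left (norm_nonneg _) (one_le_pow₀ ?_)
  have := Real.pi_gt_three
  linarith

lemma integrableOn_ball_rpow (d : ℝ) (hd : -2 < d) :
    IntegrableOn (fun x : E2 => ‖x‖ ^ d) (Metric.ball (0 : E2) 2) := by
  rw [integrableOn_fun_norm_addHaar (volume : Measure E2) (f := fun r => r ^ d)]
  have h1 : IntegrableOn (fun y : ℝ => y ^ (d + 1)) (Set.Ioo 0 2) :=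
    (intervalIntegral.integrableOn_Ioo_rpow_iff (by norm_num)).mpr (by linarith)
  refine h1.congr_fun (fun y hy => ?_) measurableSet_Ioo
  simp only [finrank_euclideanSpace, Fintype.card_fin, smul_eq_mul]
  rw [Real.rpow_add hy.1, Real.rpow_one]
  norm_num
  ring

lemma integrable_japanese : Integrable (fun x : E2 => (1 + ‖x‖) ^ (-3 : ℝ)) :=
  integrable_one_add_norm (by simp; norm_num)

lemma far_bound {e : ℝ} (he : e ≤ -3) {x : E2} (hx : 1 ≤ ‖x‖) :
    ‖x‖ ^ e ≤ 8 * (1 + ‖x‖) ^ (-3 : ℝ) := by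
  have h0 : 0 < ‖x‖ := by linarith
  calc ‖x‖ ^ e ≤ ‖x‖ ^ (-3 : ℝ) := Real.rpow_le_rpow_of_exponent_le hx he
    _ ≤ ((1 + ‖x‖) / 2) ^ (-3 : ℝ) :=
      Real.rpow_le_rpow_of_nonpos (by positivity) (by linarith) (by norm_num)
    _ = 8 * (1 + ‖x‖) ^ (-3 : ℝ) := by
      rw [Real.div_rpow (by positivity) (by norm_num)]
      have : (2 : ℝ) ^ (-3 : ℝ) = 1 / 8 := by
        rw [Real.rpow_neg (by norm_num)]; norm_num
      rw [this]; ring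

/-- Uniform bound on the unit sphere, together with integrability. -/
lemma sphere_bound (d : ℝ) (hd : -2 < d) (C : ℕ → ℝ) :
    ∃ A : ℝ, ∀ f : E2 → ℂ, SymB d C f → (∃ C', SymB (-3) C' f) →
      Integrable f ∧ ∀ w : E2, ‖w‖ = 1 → ‖𝓕⁻ f w‖ ≤ A := by
  obtain ⟨ψ, hψ, hψ0, hψ1, hψb, Cψ, hCψ⟩ := exists_cutoff
  obtain ⟨N, hN⟩ := exists_nat_ge (d + 3)
  set J := ∫ x : E2, (1 + ‖x‖) ^ (-3 : ℝ) with hJ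
  let near : E2 → ℝ := (Metric.ball (0 : E2) 2).indicator (fun x => |C 0| * ‖x‖ ^ d)
  have hnear : Integrable near := by
    rw [integrable_indicator_iff measurableSet_ball]
    exact (integrableOn_ball_rpow d hd).const_mul _
  refine ⟨(∫ x, near x) + ∫ x : E2, |mulC Cψ C N| * (8 * (1 + ‖x‖) ^ (-3 : ℝ)), ?_⟩
  rintro f hf ⟨C', hf'⟩
  have hmeas : AEStronglyMeasurable f := by
    have h1 : AEStronglyMeasurable f (volume.restrict {(0 : E2)}ᶜ) :=
      hf.1.continuousOn.aestronglyMeasurable isOpen_U.measurableSet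
    rwa [MeasureTheory.restrict_compl_singleton] at h1
  let g : E2 → ℂ := fun x => ψ x * f x
  have hg0 : ∀ x : E2, ‖x‖ < 1 → g =ᶠ[nhds x] fun _ => (0 : ℂ) := fun x hx => by
    filter_upwards [continuous_norm.continuousAt.eventually (gt_mem_nhds hx)] with y hy
    simp [g, hψ0 y hy]
  have hg : ContDiff ℝ (⊤ : ℕ∞) g := by
    rw [contDiff_iff_contDiffAt]
    intro x
    rcases eq_or_ne x 0 with rfl | hx
    · exact (contDiffAt_const (c := (0 : ℂ))).congr_of_eventuallyEq (hg0 0 (by simp))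
    · exact hψ.contDiffAt.mul (cda hf.1 hx)
  have hgs := hCψ.mul hf
  have hgs' := hCψ.mul hf'
  rw [zero_add] at hgs hgs'
  have bound : ∀ (e : ℝ) (K : ℕ → ℝ), SymB e K g → ∀ n : ℕ, e - n ≤ -3 → ∀ x,
      ‖iteratedFDeriv ℝ n g x‖ ≤ |K n| * (8 * (1 + ‖x‖) ^ (-3 : ℝ)) := by
    intro e K hK n hen x
    rcases lt_or_ge ‖x‖ 1 with hx | hx
    · rw [(Filter.EventuallyEq.iteratedFDeriv ℝ (hg0 x hx) n).eq_of_nhds]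
      have : iteratedFDeriv ℝ n (fun _ : E2 => (0 : ℂ)) x = 0 := by
        rw [iteratedFDeriv_fun_zero]; rfl
      rw [this, norm_zero]
      positivity
    · have hx0 : x ≠ 0 := by
        rintro rfl; norm_num at hx
      refine (hK.2 n x hx0).trans ?_
      have := le_abs_self (K n)
      have := far_bound hen hx
      gcongr
  have hint : ∀ n : ℕ, Integrable (iteratedFDeriv ℝ n g) := fun n => by
    refine ((integrable_japanese.const_mul 8).const_mul |mulC Cψ C' n|).mono'
      (hg.continuous_iteratedFDeriv (by exact_mod_cast le_top)).aestronglyMeasurable ?_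
    filter_upwards with x
    refine bound _ _ hgs' n ?_ x
    have : (0 : ℝ) ≤ n := n.cast_nonneg
    linarith
  have hgi : Integrable g := by
    refine ((integrable_japanese.const_mul 8).const_mul |mulC Cψ C' 0|).mono'
      hg.continuous.aestronglyMeasurable ?_
    filter_upwards with x
    have := bound _ _ hgs' 0 (by simp) x
    rwa [norm_iteratedFDeriv_zero] at this
  let l : E2 → ℂ := fun x => (1 - ψ x) * f x
  have hae : ∀ᵐ x : E2, x ≠ 0 := by
    have : volume ({(0 : E2)} : Set E2) = 0 := by simp
    exact compl_mem_ae_iff.mpr this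
  have hlb : ∀ᵐ x : E2, ‖l x‖ ≤ near x := by
    filter_upwards [hae] with x hx
    simp only [near, Set.indicator, mem_ball_zero_iff]
    split_ifs with h
    · have h1 := hf.2 0 x hx
      rw [norm_iteratedFDeriv_zero] at h1
      simp only [Nat.cast_zero, sub_zero] at h1
      calc ‖l x‖ = ‖1 - ψ x‖ * ‖f x‖ := norm_mul _ _
        _ ≤ 1 * (C 0 * ‖x‖ ^ d) := by gcongr; exact hψb x
        _ ≤ |C 0| * ‖x‖ ^ d := by
          rw [one_mul]; gcongr; exact le_abs_self _
    · simp [l, hψ1 x (not_lt.mp h)]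
  have hli : Integrable l :=
    hnear.mono' ((continuous_const.sub hψ.continuous).aestronglyMeasurable.mul hmeas) hlb
  have hfe : f = fun x => l x + g x := by
    ext x; simp only [l, g]; ring
  refine ⟨by rw [hfe]; exact hli.add hgi, fun w hw => ?_⟩
  have hsum : 𝓕⁻ f w = 𝓕⁻ l w + 𝓕⁻ g w := by
    have hl' := (Real.fourierIntegral_convergent_iff (μ := volume) (f := l) (-w)).mpr hli
    have hg' := (Real.fourierIntegral_convergent_iff (μ := volume) (f := g) (-w)).mpr hgi
    rw [Real.fourierInv_eq_fourier_neg, Real.fourierInv_eq_fourier_neg,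
      Real.fourierInv_eq_fourier_neg, Real.fourier_eq, Real.fourier_eq, Real.fourier_eq,
      ← integral_add hl' hg']
    congr 1; ext x; rw [← smul_add, ← congrFun hfe x]
  rw [hsum]
  refine (norm_add_le _ _).trans (add_le_add ?_ ?_)
  · exact (fourierInv_norm_le_integral w).trans (integral_mono_ae hli.norm hnear hlb)
  · refine (fourierInv_le_of_deriv hg hint N w hw).trans (integral_mono (hint N).norm
      ((integrable_japanese.const_mul 8).const_mul _) ?_)
    exact fun x => bound _ _ hgs N (by linarith) x

lemma fourierInv_scale (f : E2 → ℂ) (d R : ℝ) (hR : 0 < R) (w : E2) :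
    𝓕⁻ (fun x => R ^ d • f (R⁻¹ • x)) w = R ^ (d + 2) • 𝓕⁻ f (R • w) := by
  rw [Real.fourierInv_eq, Real.fourierInv_eq]
  have h := Measure.integral_comp_inv_smul_of_nonneg (volume : Measure E2)
    (fun v => R ^ d • (Real.fourierChar (inner ℝ v (R • w)) • f v)) hR.le
  have e : ∀ v : E2, Real.fourierChar (inner ℝ v w) • R ^ d • f (R⁻¹ • v) =
      R ^ d • (Real.fourierChar (inner ℝ (R⁻¹ • v) (R • w)) • f (R⁻¹ • v)) := fun v => by
    rw [real_inner_smul_left, real_inner_smul_right, smul_comm, ← mul_assoc,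
      inv_mul_cancel₀ hR.ne', one_mul]
  simp_rw [e]
  rw [h, integral_smul, smul_smul, finrank_euclideanSpace, Fintype.card_fin,
    Real.rpow_add hR, mul_comm]
  norm_num

lemma mSymb_symB (α β : ℝ) (hα : 0 < α)
    (γ : Fin 2 → ℕ) (k : ℕ) (hk : γ 0 + γ 1 = k)
    (P : E2 → ℂ)
    (hPsm : ContDiffOn ℝ (⊤ : ℕ∞) P {(0 : E2)}ᶜ)
    (hPhom : ∀ c : ℝ, 0 < c → ∀ ξ : E2, P (c • ξ) = P ξ) (e : ℝ) (he : e ≤ β + k) :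
    ∃ C, SymB e C (mSymb γ β α P) := by
  obtain ⟨C₁, h₁⟩ := symB_of_homog (β + k)
    (fun ξ : E2 => (∏ i : Fin 2, (Complex.I * (ξ i : ℂ)) ^ γ i) * ((‖ξ‖ ^ β : ℝ) : ℂ) * P ξ)
    (by
      refine ContDiffOn.mul (ContDiffOn.mul ?_ ?_) hPsm
      · refine ContDiff.contDiffOn ?_
        have hc : ∀ i : Fin 2, ContDiff ℝ (⊤ : ℕ∞) (fun ξ : E2 => ((ξ i : ℝ) : ℂ)) := fun i =>
          Complex.ofRealCLM.contDiff.comp (EuclideanSpace.proj (𝕜 := ℝ) i).contDiff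
        exact contDiff_prod fun i _ => (contDiff_const.mul (hc i)).pow _
      · exact Complex.ofRealCLM.contDiff.comp_contDiffOn (contDiffOn_norm_rpow β))
    (by
      intro c hc ξ _
      rw [hPhom c hc ξ, norm_smul, Real.norm_of_nonneg hc.le, Real.mul_rpow hc.le (norm_nonneg _),
        Real.rpow_add hc, Real.rpow_natCast, ← hk]
      simp only [Fin.prod_univ_two, PiLp.smul_apply, smul_eq_mul, Complex.real_smul]
      push_cast
      ring)
  obtain ⟨C₂, h₂⟩ := symB_exp α hα (β + k - e) (by linarith)
  refine ⟨mulC C₁ C₂, ?_⟩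
  have := h₁.mul h₂
  rw [show β + k + -(β + k - e) = e by ring] at this
  exact this

/-- Littlewood–Paley kernel estimate: if `P` is smooth away from 0,
homogeneous of degree 0, `α > 0`, `|γ| = k`, and `β + k > −2`, then
`K = 𝓕⁻¹(m)` satisfies `|K(x)| ≤ C (1+|x|)^{−(2+β+k)}`. -/
theorem multiplier_kernel_decay (α β : ℝ) (hα : 0 < α)
    (γ : Fin 2 → ℕ) (k : ℕ) (hk : γ 0 + γ 1 = k) (hβk : -2 < β + k)
    (P : E2 → ℂ)
    (hPsm : ContDiffOn ℝ (⊤ : ℕ∞) P {(0 : E2)}ᶜ)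
    (hPhom : ∀ c : ℝ, 0 < c → ∀ ξ : E2, P (c • ξ) = P ξ) :
    ∃ C > 0, ∀ x : E2,
      ‖𝓕⁻ (mSymb γ β α P) x‖ ≤ C * (1 + ‖x‖) ^ (-(2 + β + (k : ℝ))) := by
  set m := mSymb γ β α P with hm
  obtain ⟨C, hC⟩ := mSymb_symB α β hα γ k hk P hPsm hPhom (β + k) le_rfl
  obtain ⟨C', hC'⟩ := mSymb_symB α β hα γ k hk P hPsm hPhom (-3) (by linarith)
  rw [← hm] at hC hC'
  obtain ⟨A, hA⟩ := sphere_bound (β + k) hβk C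
  set s := 2 + β + (k : ℝ) with hs
  have hs0 : 0 < s := by linarith
  set I := ∫ x, ‖m x‖ with hI
  have hI0 : 0 ≤ I := integral_nonneg fun _ => norm_nonneg _
  refine ⟨2 ^ s * (|A| + I + 1), by positivity, fun x => ?_⟩
  have hx0 : 0 ≤ ‖x‖ := norm_nonneg x
  have hB : 2 ^ s * (1 + ‖x‖) ^ (-s) = ((1 + ‖x‖) / 2) ^ (-s) := by
    rw [Real.div_rpow (by positivity) (by norm_num), Real.rpow_neg (by norm_num : (0:ℝ) ≤ 2)]
    field_simp
  have hre : 2 ^ s * (|A| + I + 1) * (1 + ‖x‖) ^ (-s) =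
      (|A| + I + 1) * ((1 + ‖x‖) / 2) ^ (-s) := by rw [← hB]; ring
  rw [hre]
  have hA0 := abs_nonneg A
  rcases le_or_gt ‖x‖ 1 with h | h
  · have h1 : ‖𝓕⁻ m x‖ ≤ I := fourierInv_norm_le_integral x
    have h2 : 1 ≤ ((1 + ‖x‖) / 2) ^ (-s) :=
      Real.one_le_rpow_of_pos_of_le_one_of_nonpos (by positivity) (by linarith) (by linarith)
    calc ‖𝓕⁻ m x‖ ≤ (|A| + I + 1) * 1 := by linarith
      _ ≤ _ := by gcongr
  · have hR : 0 < ‖x‖ := by linarith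
    have hsc' : ∃ C'', SymB (-3) C'' (fun y => ‖x‖ ^ (β + k) • m (‖x‖⁻¹ • y)) := by
      obtain ⟨C₀, h₀⟩ : ∃ C₀, SymB 0 C₀ (fun _ : E2 => ((‖x‖ ^ (β + k + 3) : ℝ) : ℂ)) :=
        symB_of_homog 0 _ contDiffOn_const (by intro c hc y _; simp)
      refine ⟨mulC C₀ C', ?_⟩
      have := h₀.mul (hC'.scale hR)
      rw [zero_add] at this
      convert this using 2 with y
      rw [← Complex.real_smul, smul_smul, ← Real.rpow_add hR]
      congr 2; ring
    have hb := (hA _ (hC.scale hR) hsc').2 (‖x‖⁻¹ • x) (by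
      rw [norm_smul, norm_inv, norm_norm, inv_mul_cancel₀ hR.ne'])
    rw [fourierInv_scale _ _ _ hR, smul_smul, mul_inv_cancel₀ hR.ne', one_smul, norm_smul,
      Real.norm_of_nonneg (by positivity), show β + k + 2 = s by rw [hs]; ring] at hb
    have hp : 0 < ‖x‖ ^ s := by positivity
    calc ‖𝓕⁻ m x‖ = ‖x‖ ^ (-s) * (‖x‖ ^ s * ‖𝓕⁻ m x‖) := by
          rw [← mul_assoc, ← Real.rpow_add hR]; simp
      _ ≤ ‖x‖ ^ (-s) * (|A| + I + 1) := by
          gcongr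
          have := le_abs_self A
          linarith
      _ ≤ ((1 + ‖x‖) / 2) ^ (-s) * (|A| + I + 1) := by
          refine mul_le_mul_of_nonneg_right ?_ (by positivity)
          exact Real.rpow_le_rpow_of_nonpos (by positivity) (by linarith) (by linarith)
      _ = _ := mul_comm _ _
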